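/- Consider n ≥ 2 users arranged on a directed ring, each user u ∈ {1,…,n} holding contributions x_u^1,…,x_u^K ∈ [0,1], and a noise distribution ν with standard deviation σ_loc making the additive mechanism (ε,δ)-LDP on [0,1]. Run the token protocol (Algorithm 1): the token starts at 0 and traverses users 1,2,…,n in order for K full cycles (Kn steps); at each step the current user adds her current contribution to the token, and additionally, at the first step and then after every n−1 further steps (for a total of m = ⌈Kn/(n−1)⌉ times), an independent sample from ν is added to the token. Then: (i) the final token value is an unbiased estimator of x̄ = Σ_{u=1}^n Σ_{k=1}^K x_u^k with standard deviation √m · σ_loc; and (ii) for every δ' > 0, every pair of distinct users u ≠ v, and every two contribution families in [0,1]^{n×K} that agree on all users except possibly u, the distributions of user v's view (the K token values v observes, one per cycle) are (√(2K ln(1/δ'))·ε + K·ε·(e^ε − 1), K·δ + δ')-indistinguishable. -/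

import Mathlib

open MeasureTheory

noncomputable section

/-- Two measures are `(ε,δ)`-indistinguishable if for every measurable set `S`,
`μ S ≤ e^ε·ν S + δ` and `ν S ≤ e^ε·μ S + δ`. -/
def Indist {Ω : Type*} [MeasurableSpace Ω] (ε δ : ℝ) (μ ν : Measure Ω) : Prop :=
  ∀ S : Set Ω, MeasurableSet S →
    μ S ≤ ENNReal.ofReal (Real.exp ε) * ν S + ENNReal.ofReal δ ∧
    ν S ≤ ENNReal.ofReal (Real.exp ε) * μ S + ENNReal.ofReal δ

/-- Algorithm 1 (token walk on the directed ring, users `0,…,n-1`, `K` cycles,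
steps `t = 0,…,Kn-1`; at step `t` user `t % n` adds her contribution `x (t % n) (t / n)`,
and an independent noise sample `z j` is added at step `j·(n-1)` for each `j < m`):
value of the token after the first `s` steps have been completed. -/
def ringToken (n m : ℕ) (x : ℕ → ℕ → ℝ) (z : Fin m → ℝ) (s : ℕ) : ℝ :=
  (∑ t ∈ Finset.range s, x (t % n) (t / n)) +
    ∑ j : Fin m, if (j : ℕ) * (n - 1) < s then z j else 0

/-- The view of user `v` on the ring: the `K` token values `v` observes, one per cycle
(the value of the token when `v` receives it in cycle `k`, i.e. after `k·n + v` steps). -/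
def ringView (n m K : ℕ) (x : ℕ → ℕ → ℝ) (v : ℕ) (z : Fin m → ℝ) : Fin K → ℝ :=
  fun k => ringToken n m x z ((k : ℕ) * n + v)

/-!
If `v` sees the contribution that `u` makes in cycle `c` at all, then a noise sample is added
between the last view of `v` without this contribution and the first view with it, because two
consecutive views are `n` steps apart and noise comes every `n - 1` steps. Adding the contribution
to that sample instead leaves the view unchanged, so the view of `v` is a function of the noise
vector shifted in at most `K` coordinates by the contributions of `u`, and privacy reduces to the
composition of `K` indistinguishable pairs.

For advanced composition, `(ε,δ)`-indistinguishable probability measures `P` and `Q` are first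
replaced by `(ε,0)`-indistinguishable measures of equal mass at least `1 - δ`, one below
`P ⊓ e^ε Q` and one below `Q ⊓ e^ε P`. The privacy loss of the normalized pair lies in `[-ε, ε]` and
has mean at most `ε (e^ε - 1)`, so Hoeffding's inequality bounds the probability that the sum of `K`
independent losses exceeds `√(2K ln(1/δ')) ε + K ε (e^ε - 1)` by `δ'`.
-/

section Indist

variable {Ω : Type*} [MeasurableSpace Ω] {ε ε' δ Δ : ℝ} {P Q P' Q' : Measure Ω}

lemma Indist.symm (h : Indist ε δ P Q) : Indist ε δ Q P :=
  fun S hS => (h S hS).symm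

lemma Indist.refl (P : Measure Ω) : Indist 0 0 P P :=
  fun _ _ => by simp

lemma Indist.mono (h : Indist ε δ P Q) (hε : ε ≤ ε') (hδ : δ ≤ Δ) : Indist ε' Δ P Q := by
  intro S hS
  obtain ⟨hPQ, hQP⟩ := h S hS
  exact ⟨hPQ.trans (by gcongr), hQP.trans (by gcongr)⟩

lemma Indist.map {Ω' : Type*} [MeasurableSpace Ω'] (h : Indist ε δ P Q) {f : Ω → Ω'}
    (hf : Measurable f) : Indist ε δ (P.map f) (Q.map f) := by
  intro S hS
  rw [Measure.map_apply hf hS, Measure.map_apply hf hS]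
  exact h _ (hf hS)

lemma indist_of_one_le [IsProbabilityMeasure P] [IsProbabilityMeasure Q] (hδ : 1 ≤ δ) :
    Indist ε δ P Q := fun _ _ =>
  have h : 1 ≤ ENNReal.ofReal δ := ENNReal.one_le_ofReal.2 hδ
  ⟨(prob_le_one.trans h).trans le_add_self, (prob_le_one.trans h).trans le_add_self⟩

lemma indist_zero_iff :
    Indist ε 0 P Q ↔
      P ≤ ENNReal.ofReal (Real.exp ε) • Q ∧ Q ≤ ENNReal.ofReal (Real.exp ε) • P := by
  simp only [Indist, ENNReal.ofReal_zero, add_zero, Measure.le_iff, Measure.smul_apply,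
    smul_eq_mul]
  exact ⟨fun h => ⟨fun S hS => (h S hS).1, fun S hS => (h S hS).2⟩,
    fun h S hS => ⟨h.1 S hS, h.2 S hS⟩⟩

lemma Indist.smul (h : Indist ε 0 P Q) (r : ENNReal) : Indist ε 0 (r • P) (r • Q) := by
  rw [indist_zero_iff] at h ⊢
  rw [smul_comm _ r, smul_comm _ r]
  exact ⟨by gcongr; exact h.1, by gcongr; exact h.2⟩

lemma measureReal_le_of_smul_le [IsProbabilityMeasure P] [IsProbabilityMeasure P'] (hΔ : Δ ≤ 1)
    (h : ENNReal.ofReal (1 - Δ) • P' ≤ P) (S : Set Ω) : (1 - Δ) * P'.real S ≤ P.real S := by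
  have := ENNReal.toReal_mono (measure_ne_top P S) (h S)
  rwa [Measure.smul_apply, smul_eq_mul, ENNReal.toReal_mul,
    ENNReal.toReal_ofReal (sub_nonneg.2 hΔ)] at this

lemma indist_iff_measureReal [IsFiniteMeasure P] [IsFiniteMeasure Q] (hδ : 0 ≤ δ) :
    Indist ε δ P Q ↔ ∀ S, MeasurableSet S →
      P.real S ≤ Real.exp ε * Q.real S + δ ∧ Q.real S ≤ Real.exp ε * P.real S + δ := by
  have key (μ ν : Measure Ω) [IsFiniteMeasure μ] [IsFiniteMeasure ν] (S : Set Ω) :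
      μ S ≤ ENNReal.ofReal (Real.exp ε) * ν S + ENNReal.ofReal δ ↔
        μ.real S ≤ Real.exp ε * ν.real S + δ := by
    rw [← ofReal_measureReal (μ := μ), ← ofReal_measureReal (μ := ν),
      ← ENNReal.ofReal_mul (Real.exp_pos _).le, ← ENNReal.ofReal_add (by positivity) hδ,
      ENNReal.ofReal_le_ofReal_iff (by positivity)]
  simp only [Indist, key]

lemma Indist.of_smul_le [IsProbabilityMeasure P] [IsProbabilityMeasure Q]
    [IsProbabilityMeasure P'] [IsProbabilityMeasure Q'] (h : Indist ε δ P' Q') (hδ : 0 ≤ δ)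
    (hΔ : 0 ≤ Δ) (hP : ENNReal.ofReal (1 - Δ) • P' ≤ P) (hQ : ENNReal.ofReal (1 - Δ) • Q' ≤ Q) :
    Indist ε (Δ + δ) P Q := by
  rcases le_total 1 Δ with hΔ1 | hΔ1
  · exact indist_of_one_le (by linarith)
  rw [indist_iff_measureReal hδ] at h
  rw [indist_iff_measureReal (by positivity)]
  have key {P P' Q Q' : Measure Ω} [IsProbabilityMeasure P] [IsProbabilityMeasure Q]
      [IsProbabilityMeasure P'] [IsProbabilityMeasure Q']
      (hP : ENNReal.ofReal (1 - Δ) • P' ≤ P) (hQ : ENNReal.ofReal (1 - Δ) • Q' ≤ Q)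
      {S : Set Ω} (hS : MeasurableSet S) (h : P'.real S ≤ Real.exp ε * Q'.real S + δ) :
      P.real S ≤ Real.exp ε * Q.real S + (Δ + δ) := by
    have hPc := measureReal_le_of_smul_le hΔ1 hP Sᶜ
    rw [probReal_compl_eq_one_sub hS, probReal_compl_eq_one_sub hS] at hPc
    calc P.real S ≤ Δ + (1 - Δ) * P'.real S := by linarith
      _ ≤ Δ + (1 - Δ) * (Real.exp ε * Q'.real S + δ) := by gcongr
      _ = Real.exp ε * ((1 - Δ) * Q'.real S) + (Δ + (1 - Δ) * δ) := by ring
      _ ≤ Real.exp ε * Q.real S + (Δ + 1 * δ) := by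
        gcongr
        · exact measureReal_le_of_smul_le hΔ1 hQ S
        · linarith
      _ = Real.exp ε * Q.real S + (Δ + δ) := by rw [one_mul]
  exact fun S hS => ⟨key hP hQ hS (h S hS).1, key hQ hP hS (h S hS).2⟩

end Indist

section PurePart

variable {Ω : Type*} [MeasurableSpace Ω]

lemma exists_measure_between {μ ν : Measure Ω} [IsFiniteMeasure μ] [IsFiniteMeasure ν]
    (hμν : μ ≤ ν) {r : ENNReal} (hμr : μ Set.univ ≤ r) (hrν : r ≤ ν Set.univ) :
    ∃ σ : Measure Ω, μ ≤ σ ∧ σ ≤ ν ∧ σ Set.univ = r := by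
  have hgap : (ν - μ) Set.univ = ν Set.univ - μ Set.univ :=
    Measure.sub_apply MeasurableSet.univ hμν
  set t := (r - μ Set.univ) / (ν Set.univ - μ Set.univ) with ht
  have ht1 : t ≤ 1 := ENNReal.div_le_of_le_mul (by simpa using tsub_le_tsub_right hrν _)
  refine ⟨μ + t • (ν - μ), Measure.le_add_right le_rfl, ?_, ?_⟩
  · calc μ + t • (ν - μ) ≤ μ + (1 : ENNReal) • (ν - μ) := by gcongr
      _ = ν := by rw [one_smul, add_comm, Measure.sub_add_cancel_of_le hμν]
  · rw [Measure.add_apply, Measure.smul_apply, smul_eq_mul, hgap, ht,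
      ENNReal.div_mul_cancel', add_tsub_cancel_of_le hμr]
    · exact fun h => le_antisymm (h ▸ tsub_le_tsub_right hrν _) zero_le
    · exact fun h => absurd h (ENNReal.sub_ne_top (measure_ne_top ν _))

lemma inv_smul_le_iff_le_smul {μ ν : Measure Ω} {c : ENNReal} (hc : c ≠ 0) (hc' : c ≠ ⊤) :
    c⁻¹ • μ ≤ ν ↔ μ ≤ c • ν := by
  simp only [Measure.le_iff, Measure.smul_apply, smul_eq_mul, ENNReal.inv_mul_le_iff hc hc']

lemma le_inf_smul_univ_of_forall_le {P Q : Measure Ω} [IsProbabilityMeasure P] {c d : ENNReal}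
    (h : ∀ S, MeasurableSet S → P S ≤ c * Q S + d) : 1 - d ≤ (P ⊓ c • Q) Set.univ := by
  rw [Measure.inf_apply MeasurableSet.univ]
  refine le_sInf ?_
  rintro _ ⟨t, rfl⟩
  have hT : MeasurableSet (toMeasurable P t) := measurableSet_toMeasurable P t
  rw [tsub_le_iff_right, Set.inter_univ, Set.inter_univ]
  calc 1 = P t + P (toMeasurable P t)ᶜ := by
        rw [← measure_toMeasurable t, prob_add_prob_compl hT]
    _ ≤ P t + (c * Q (toMeasurable P t)ᶜ + d) := by gcongr; exact h _ hT.compl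
    _ ≤ P t + (c * Q tᶜ + d) := by gcongr; exact subset_toMeasurable P t
    _ = P t + (c • Q) tᶜ + d := by rw [Measure.smul_apply, smul_eq_mul, add_assoc]

lemma inf_smul_le_smul_inf_smul (P Q : Measure Ω) {c : ENNReal} (hc : 1 ≤ c) (hc' : c ≠ ⊤) :
    P ⊓ c • Q ≤ c • (Q ⊓ c • P) := by
  have hc0 : c ≠ 0 := (zero_lt_one.trans_le hc).ne'
  rw [← inv_smul_le_iff_le_smul hc0 hc']
  refine le_inf ((inv_smul_le_iff_le_smul hc0 hc').2 inf_le_right) ?_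
  calc c⁻¹ • (P ⊓ c • Q) ≤ c • P := by
        gcongr
        · exact (ENNReal.inv_le_one.2 hc).trans hc
        · exact inf_le_left

lemma smul_inv_univ_smul_le {μ : Measure Ω} {a : ENNReal} (ha : a ≤ μ Set.univ) :
    a • (μ Set.univ)⁻¹ • μ ≤ μ := by
  calc a • (μ Set.univ)⁻¹ • μ = (a / μ Set.univ) • μ := by rw [smul_smul, div_eq_mul_inv]
    _ ≤ (1 : ENNReal) • μ := by
      gcongr
      exact ENNReal.div_le_of_le_mul (by rwa [one_mul])
    _ = μ := one_smul _ _

lemma Indist.exists_le_univ_eq_min {ε : ℝ} {P Q : Measure Ω} [IsFiniteMeasure P]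
    [IsFiniteMeasure Q] (h : Indist ε 0 P Q) (hε : 0 ≤ ε) :
    ∃ P' ≤ P, ∃ Q' ≤ Q, Indist ε 0 P' Q' ∧
      P' Set.univ = min (P Set.univ) (Q Set.univ) ∧
      Q' Set.univ = min (P Set.univ) (Q Set.univ) := by
  wlog hle : Q Set.univ ≤ P Set.univ generalizing P Q
  · obtain ⟨Q', hQ, P', hP, h', hQ', hP'⟩ := this h.symm (le_of_not_ge hle)
    rw [min_comm] at hQ' hP'
    exact ⟨P', hP, Q', hQ, h'.symm, hP', hQ'⟩
  set c := ENNReal.ofReal (Real.exp ε) with hc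
  have hc0 : c ≠ 0 := by simp [hc, Real.exp_pos]
  have hc1 : 1 ≤ c := ENNReal.one_le_ofReal.2 (Real.one_le_exp hε)
  have hinv {μ ν : Measure Ω} : c⁻¹ • μ ≤ ν ↔ μ ≤ c • ν :=
    inv_smul_le_iff_le_smul hc0 ENNReal.ofReal_ne_top
  obtain ⟨hPQ, hQP⟩ := indist_zero_iff.1 h
  obtain ⟨P', hQP', hP', hmass⟩ : ∃ P', c⁻¹ • Q ≤ P' ∧ P' ≤ P ∧ P' Set.univ = Q Set.univ := by
    have : IsFiniteMeasure (c⁻¹ • Q) := Q.smul_finite (ENNReal.inv_ne_top.2 hc0)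
    refine exists_measure_between (hinv.2 hQP) ?_ hle
    exact mul_le_of_le_one_left zero_le (ENNReal.inv_le_one.2 hc1)
  rw [min_eq_right hle]
  exact ⟨P', hP', Q, le_rfl, indist_zero_iff.2 ⟨hP'.trans hPQ, hinv.1 hQP'⟩, hmass, rfl⟩

lemma Indist.exists_pure_part {ε δ : ℝ} {P Q : Measure Ω} [IsProbabilityMeasure P]
    [IsProbabilityMeasure Q] (h : Indist ε δ P Q) (hε : 0 ≤ ε) (hδ : 0 ≤ δ) (hδ1 : δ < 1) :
    ∃ P' Q' : Measure Ω, IsProbabilityMeasure P' ∧ IsProbabilityMeasure Q' ∧ Indist ε 0 P' Q' ∧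
      ENNReal.ofReal (1 - δ) • P' ≤ P ∧ ENNReal.ofReal (1 - δ) • Q' ≤ Q := by
  set c := ENNReal.ofReal (Real.exp ε)
  have hc1 : 1 ≤ c := ENNReal.one_le_ofReal.2 (Real.one_le_exp hε)
  have hP₀ : ENNReal.ofReal (1 - δ) ≤ (P ⊓ c • Q) Set.univ := by
    rw [ENNReal.ofReal_sub _ hδ, ENNReal.ofReal_one]
    exact le_inf_smul_univ_of_forall_le fun S hS => (h S hS).1
  have hQ₀ : ENNReal.ofReal (1 - δ) ≤ (Q ⊓ c • P) Set.univ := by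
    rw [ENNReal.ofReal_sub _ hδ, ENNReal.ofReal_one]
    exact le_inf_smul_univ_of_forall_le fun S hS => (h S hS).2
  have : IsFiniteMeasure (P ⊓ c • Q) := isFiniteMeasure_of_le P inf_le_left
  have : IsFiniteMeasure (Q ⊓ c • P) := isFiniteMeasure_of_le Q inf_le_left
  have hpure : Indist ε 0 (P ⊓ c • Q) (Q ⊓ c • P) := indist_zero_iff.2
    ⟨inf_smul_le_smul_inf_smul P Q hc1 ENNReal.ofReal_ne_top,
      inf_smul_le_smul_inf_smul Q P hc1 ENNReal.ofReal_ne_top⟩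
  obtain ⟨P₁, hP₁, Q₁, hQ₁, hind, hPmass, hQmass⟩ := hpure.exists_le_univ_eq_min hε
  have hmass := hPmass ▸ le_min hP₀ hQ₀
  have hPQ : Q₁ Set.univ = P₁ Set.univ := hQmass.trans hPmass.symm
  have hne : NeZero P₁ := ⟨by rintro rfl; simp [hδ1.not_ge] at hmass⟩
  have hne' : NeZero Q₁ := ⟨by rintro rfl; simp [← hPQ, hδ1.not_ge] at hmass⟩
  have : IsFiniteMeasure P₁ := isFiniteMeasure_of_le _ hP₁
  have : IsFiniteMeasure Q₁ := isFiniteMeasure_of_le _ hQ₁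
  refine ⟨(P₁ Set.univ)⁻¹ • P₁, (Q₁ Set.univ)⁻¹ • Q₁, inferInstance, inferInstance, ?_,
    (smul_inv_univ_smul_le hmass).trans (hP₁.trans inf_le_left),
    (smul_inv_univ_smul_le (hPQ ▸ hmass)).trans (hQ₁.trans inf_le_left)⟩
  rw [hPQ]
  exact hind.smul _

end PurePart

section PrivacyLoss

open ProbabilityTheory

variable {Ω : Type*} [MeasurableSpace Ω] {ε δ : ℝ} {P Q : Measure Ω} {ℓ : Ω → ℝ}

/-- `ℓ` is a version of the privacy loss `log (dP/dQ)` of `P` against `Q` which is bounded by `ε`.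
The bound is required everywhere, not just almost everywhere, so that it survives the passage to
product measures without any bookkeeping of null sets. -/
structure IsPrivacyLoss (ε : ℝ) (P Q : Measure Ω) (ℓ : Ω → ℝ) : Prop where
  measurable : Measurable ℓ
  mem_Icc : ∀ ω, ℓ ω ∈ Set.Icc (-ε) ε
  eq_withDensity : P = Q.withDensity fun ω => ENNReal.ofReal (Real.exp (ℓ ω))

lemma Indist.ae_rnDeriv_mem_Icc [IsFiniteMeasure P] [IsFiniteMeasure Q] (h : Indist ε 0 P Q) :
    ∀ᵐ ω ∂Q, (P.rnDeriv Q ω).toReal ∈ Set.Icc (Real.exp (-ε)) (Real.exp ε) := by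
  have hc0 : ENNReal.ofReal (Real.exp ε) ≠ 0 := by simp [Real.exp_pos]
  obtain ⟨hPQ, hQP⟩ := indist_zero_iff.1 h
  have hac : P ≪ Q := Measure.absolutelyContinuous_of_le_smul hPQ
  have hle : P.rnDeriv Q ≤ᵐ[Q] fun _ => ENNReal.ofReal (Real.exp ε) := by
    refine ae_le_of_forall_setLIntegral_le_of_sigmaFinite (P.measurable_rnDeriv Q) fun s _ _ => ?_
    rw [Measure.setLIntegral_rnDeriv hac, setLIntegral_const]
    exact hPQ s
  have hge : (fun _ => (ENNReal.ofReal (Real.exp ε))⁻¹) ≤ᵐ[Q] P.rnDeriv Q := by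
    refine ae_le_of_forall_setLIntegral_le_of_sigmaFinite measurable_const fun s _ _ => ?_
    rw [Measure.setLIntegral_rnDeriv hac, setLIntegral_const]
    exact (inv_smul_le_iff_le_smul hc0 ENNReal.ofReal_ne_top).2 hQP s
  filter_upwards [hle, hge] with ω hle hge
  rw [← ENNReal.ofReal_inv_of_pos (Real.exp_pos ε), ← Real.exp_neg] at hge
  exact ⟨(ENNReal.ofReal_le_iff_le_toReal (hle.trans_lt ENNReal.ofReal_lt_top).ne).1 hge,
    ENNReal.toReal_le_of_le_ofReal (Real.exp_pos ε).le hle⟩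

lemma Indist.exists_isPrivacyLoss [IsFiniteMeasure P] [IsFiniteMeasure Q] (h : Indist ε 0 P Q)
    (hε : 0 ≤ ε) : ∃ ℓ, IsPrivacyLoss ε P Q ℓ := by
  have hac : P ≪ Q := Measure.absolutelyContinuous_of_le_smul (indist_zero_iff.1 h).1
  refine ⟨fun ω => max (-ε) (min ε (llr P Q ω)), ?_, fun ω => ?_, ?_⟩
  · exact measurable_const.max (measurable_const.min (measurable_llr P Q))
  · exact ⟨le_max_left _ _, max_le (by linarith) (min_le_left _ _)⟩
  · nth_rewrite 1 [← Measure.withDensity_rnDeriv_eq P Q hac]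
    refine withDensity_congr_ae ?_
    filter_upwards [h.ae_rnDeriv_mem_Icc, P.rnDeriv_lt_top Q] with ω ⟨hge, hle⟩ hfin
    have hpos : 0 < (P.rnDeriv Q ω).toReal := (Real.exp_pos _).trans_le hge
    have hlog : llr P Q ω ∈ Set.Icc (-ε) ε :=
      ⟨(Real.le_log_iff_exp_le hpos).2 hge, (Real.log_le_iff_le_exp hpos).2 hle⟩
    rw [min_eq_right hlog.2, max_eq_right hlog.1, llr_def, Real.exp_log hpos,
      ENNReal.ofReal_toReal hfin.ne]

lemma exp_mul_self_le_of_abs_le {a : ℝ} (ha : |a| ≤ ε) :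
    Real.exp a * a ≤ ε * (Real.exp ε - 1) + (Real.exp a - 1) := by
  have habs : |Real.exp a - 1| ≤ Real.exp ε - 1 := by
    refine abs_sub_le_iff.2 ⟨by gcongr; exact (le_abs_self a).trans ha, ?_⟩
    linarith [Real.add_one_le_exp a, Real.add_one_le_exp ε, neg_abs_le a]
  calc Real.exp a * a = a * (Real.exp a - 1) + a := by ring
    _ ≤ |a| * |Real.exp a - 1| + (Real.exp a - 1) := by
      rw [← abs_mul]
      exact add_le_add (le_abs_self _) (by linarith [Real.add_one_le_exp a])
    _ ≤ ε * (Real.exp ε - 1) + (Real.exp a - 1) := by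
      gcongr
      exact (abs_nonneg a).trans ha

namespace IsPrivacyLoss

lemma abs_le (h : IsPrivacyLoss ε P Q ℓ) (ω : Ω) : |ℓ ω| ≤ ε :=
  _root_.abs_le.2 (h.mem_Icc ω)

lemma measurable_exp (h : IsPrivacyLoss ε P Q ℓ) :
    Measurable fun ω => ENNReal.ofReal (Real.exp (ℓ ω)) :=
  h.measurable.exp.ennreal_ofReal

lemma integral_eq (h : IsPrivacyLoss ε P Q ℓ) (f : Ω → ℝ) :
    ∫ ω, f ω ∂P = ∫ ω, Real.exp (ℓ ω) * f ω ∂Q := by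
  rw [h.eq_withDensity, integral_withDensity_eq_integral_toReal_smul h.measurable_exp (by simp)]
  simp [ENNReal.toReal_ofReal (Real.exp_pos _).le]

lemma integrable_exp [IsFiniteMeasure Q] (h : IsPrivacyLoss ε P Q ℓ) :
    Integrable (fun ω => Real.exp (ℓ ω)) Q :=
  Integrable.of_mem_Icc 0 (Real.exp ε) h.measurable.exp.aemeasurable
    (.of_forall fun ω => ⟨(Real.exp_pos _).le, Real.exp_le_exp.2 (h.mem_Icc ω).2⟩)

/-- The expected loss is of second order in `ε`: the first-order term `∫ (e^ℓ - 1) ∂Q` vanishes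
since `P` and `Q` have the same mass. -/
lemma integral_le [IsProbabilityMeasure P] [IsProbabilityMeasure Q] (h : IsPrivacyLoss ε P Q ℓ) :
    ∫ ω, ℓ ω ∂P ≤ ε * (Real.exp ε - 1) := by
  have hexp : ∫ ω, Real.exp (ℓ ω) ∂Q = 1 := by
    simpa using (h.integral_eq fun _ => 1).symm
  have hint : Integrable (fun ω => Real.exp (ℓ ω) - 1) Q :=
    h.integrable_exp.sub (integrable_const _)
  calc ∫ ω, ℓ ω ∂P = ∫ ω, Real.exp (ℓ ω) * ℓ ω ∂Q := h.integral_eq ℓ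
    _ ≤ ∫ ω, (ε * (Real.exp ε - 1) + (Real.exp (ℓ ω) - 1)) ∂Q := by
      refine integral_mono ?_ ((integrable_const _).add hint)
        fun ω => exp_mul_self_le_of_abs_le (h.abs_le ω)
      exact h.integrable_exp.mul_bdd h.measurable.aestronglyMeasurable (.of_forall h.abs_le)
    _ = ε * (Real.exp ε - 1) := by
      rw [integral_add (integrable_const _) hint,
        integral_sub h.integrable_exp (integrable_const _), hexp]
      simp

lemma measure_le_of_measure_lt_le (h : IsPrivacyLoss ε P Q ℓ) {t : ℝ}
    (ht : P {ω | t < ℓ ω} ≤ ENNReal.ofReal δ) {S : Set Ω} (hS : MeasurableSet S) :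
    P S ≤ ENNReal.ofReal (Real.exp t) * Q S + ENNReal.ofReal δ := by
  have hT : MeasurableSet {ω | ℓ ω ≤ t} := h.measurable measurableSet_Iic
  have hlow : P (S ∩ {ω | ℓ ω ≤ t}) ≤ ENNReal.ofReal (Real.exp t) * Q S := by
    nth_rewrite 1 [h.eq_withDensity]
    rw [withDensity_apply _ (hS.inter hT)]
    calc ∫⁻ ω in S ∩ {ω | ℓ ω ≤ t}, ENNReal.ofReal (Real.exp (ℓ ω)) ∂Q
        ≤ ∫⁻ _ in S ∩ {ω | ℓ ω ≤ t}, ENNReal.ofReal (Real.exp t) ∂Q :=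
          setLIntegral_mono measurable_const fun ω hω => by gcongr; exact hω.2
      _ ≤ ENNReal.ofReal (Real.exp t) * Q S := by
        rw [setLIntegral_const]
        gcongr
        exact Set.inter_subset_left
  calc P S ≤ P (S ∩ {ω | ℓ ω ≤ t}) + P (S \ {ω | ℓ ω ≤ t}) := measure_le_inter_add_sdiff P _ _
    _ ≤ ENNReal.ofReal (Real.exp t) * Q S + ENNReal.ofReal δ := by
      gcongr
      exact (measure_mono fun ω hω => show t < ℓ ω from not_le.1 hω.2).trans ht

end IsPrivacyLoss

end PrivacyLoss

section Pi

open ProbabilityTheory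

variable {ι : Type*} [Fintype ι] {Ω : ι → Type*} [∀ i, MeasurableSpace (Ω i)]
  {P Q : ∀ i, Measure (Ω i)}

lemma lintegral_pi_prod [∀ i, IsProbabilityMeasure (P i)] {f : ∀ i, Ω i → ENNReal}
    (hf : ∀ i, Measurable (f i)) :
    ∫⁻ z, ∏ i, f i (z i) ∂(Measure.pi P) = ∏ i, ∫⁻ a, f i a ∂(P i) := by
  calc ∫⁻ z, ∏ i, f i (z i) ∂(Measure.pi P) = ∏ i, ∫⁻ z, f i (z i) ∂(Measure.pi P) :=
        lintegral_prod_eq_prod_lintegral_of_indepFun Finset.univ (fun i (z : ∀ i, Ω i) => f i (z i))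
          (iIndepFun_pi fun i => (hf i).aemeasurable) fun i => (hf i).comp (measurable_pi_apply i)
    _ = ∏ i, ∫⁻ a, f i a ∂(P i) :=
        Finset.prod_congr rfl fun i _ => (measurePreserving_eval P i).lintegral_comp (hf i)

lemma pi_eq_pi_withDensity [∀ i, IsProbabilityMeasure (P i)] [∀ i, IsProbabilityMeasure (Q i)]
    {f : ∀ i, Ω i → ENNReal} (hf : ∀ i, Measurable (f i))
    (h : ∀ i, P i = (Q i).withDensity (f i)) :
    Measure.pi P = (Measure.pi Q).withDensity fun z => ∏ i, f i (z i) := by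
  classical
  refine Measure.pi_eq fun s hs => ?_
  have hind (z : ∀ i, Ω i) : (Set.univ.pi s).indicator (fun z => ∏ i, f i (z i)) z =
      ∏ i, (s i).indicator (f i) (z i) := by
    simp only [Set.indicator_apply, Set.mem_univ_pi, Finset.prod_ite_zero, Finset.mem_univ,
      true_implies]
  rw [withDensity_apply _ (MeasurableSet.univ_pi hs),
    ← lintegral_indicator (MeasurableSet.univ_pi hs)]
  simp only [hind, lintegral_pi_prod fun i => (hf i).indicator (hs i), lintegral_indicator (hs _),
    h, withDensity_apply _ (hs _)]

lemma prod_smul_pi_le [∀ i, SigmaFinite (P i)] [∀ i, SigmaFinite (Q i)] {c : ι → ENNReal}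
    (h : ∀ i, c i • P i ≤ Q i) : (∏ i, c i) • Measure.pi P ≤ Measure.pi Q := by
  rw [Measure.le_iff]
  intro S hS
  have hbox : (∏ i, c i) • (Measure.pi P).toOuterMeasure ≤
      OuterMeasure.pi fun i => (Q i).toOuterMeasure := by
    rw [OuterMeasure.le_pi]
    intro s _
    calc (∏ i, c i) * Measure.pi P (Set.univ.pi s) = ∏ i, c i * P i (s i) := by
          rw [Measure.pi_pi, Finset.prod_mul_distrib]
      _ ≤ ∏ i, Q i (s i) := Finset.prod_le_prod' fun i _ => h i (s i)
  have hQ : Measure.pi Q S = OuterMeasure.pi (fun i => (Q i).toOuterMeasure) S := by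
    rw [Measure.pi, toMeasure_apply _ _ hS]
  exact hQ ▸ hbox S

lemma one_sub_sum_le_prod_one_sub {κ : Type*} (s : Finset κ) {a : κ → ℝ}
    (h0 : ∀ i ∈ s, 0 ≤ a i) (h1 : ∀ i ∈ s, a i ≤ 1) : 1 - ∑ i ∈ s, a i ≤ ∏ i ∈ s, (1 - a i) := by
  induction s using Finset.cons_induction with
  | empty => simp
  | cons j s hj ih =>
    simp only [Finset.forall_mem_cons] at h0 h1
    rw [Finset.sum_cons, Finset.prod_cons]
    nlinarith [ih h0.2 h1.2, Finset.sum_nonneg h0.2]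

lemma IsPrivacyLoss.pi [∀ i, IsProbabilityMeasure (P i)] [∀ i, IsProbabilityMeasure (Q i)]
    {ε : ι → ℝ} {ℓ : ∀ i, Ω i → ℝ} (h : ∀ i, IsPrivacyLoss (ε i) (P i) (Q i) (ℓ i)) :
    IsPrivacyLoss (∑ i, ε i) (Measure.pi P) (Measure.pi Q) fun z => ∑ i, ℓ i (z i) where
  measurable := Finset.measurable_sum _ fun i _ => (h i).measurable.comp (measurable_pi_apply i)
  mem_Icc z := by
    rw [← Finset.sum_neg_distrib]
    exact ⟨Finset.sum_le_sum fun i _ => ((h i).mem_Icc _).1,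
      Finset.sum_le_sum fun i _ => ((h i).mem_Icc _).2⟩
  eq_withDensity := by
    rw [pi_eq_pi_withDensity (fun i => (h i).measurable_exp) fun i => (h i).eq_withDensity]
    simp only [Real.exp_sum, ENNReal.ofReal_prod_of_nonneg fun _ _ => (Real.exp_pos _).le]

lemma IsPrivacyLoss.hasSubgaussianMGF_eval [∀ i, IsProbabilityMeasure (P i)] {i : ι} {ε : ℝ}
    {R : Measure (Ω i)} {ℓ : Ω i → ℝ} (h : IsPrivacyLoss ε (P i) R ℓ) :
    HasSubgaussianMGF (fun z => ℓ (z i) - ∫ a, ℓ a ∂(P i)) (‖ε‖₊ ^ 2) (Measure.pi P) := by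
  have hm : Measurable fun z : ∀ i, Ω i => ℓ (z i) := h.measurable.comp (measurable_pi_apply i)
  have hsub := hasSubgaussianMGF_of_mem_Icc (μ := Measure.pi P) hm.aemeasurable
    (.of_forall fun z => h.mem_Icc (z i))
  rw [integral_comp_eval h.measurable.aestronglyMeasurable] at hsub
  convert hsub using 2
  rw [sub_neg_eq_add, ← two_mul, nnnorm_mul, Real.nnnorm_two, mul_div_cancel_left₀ _ two_ne_zero]

lemma IsPrivacyLoss.measure_pi_lt_sum_le [∀ i, IsProbabilityMeasure (P i)]
    [∀ i, IsProbabilityMeasure (Q i)] {ε : ι → ℝ} {ℓ : ∀ i, Ω i → ℝ}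
    (h : ∀ i, IsPrivacyLoss (ε i) (P i) (Q i) (ℓ i)) {δ : ℝ} (hδ : 0 < δ) :
    Measure.pi P {z | √(2 * (∑ i, ε i ^ 2) * Real.log (1 / δ)) +
      ∑ i, ε i * (Real.exp (ε i) - 1) < ∑ i, ℓ i (z i)} ≤ ENNReal.ofReal δ := by
  have hmean : ∑ i, ∫ a, ℓ i a ∂(P i) ≤ ∑ i, ε i * (Real.exp (ε i) - 1) :=
    Finset.sum_le_sum fun i _ => (h i).integral_le
  set V := ∑ i, ε i ^ 2
  set t := √(2 * V * Real.log (1 / δ)) with ht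
  rcases le_or_gt 1 δ with hδ1 | hδ1
  · exact prob_le_one.trans (ENNReal.one_le_ofReal.2 hδ1)
  rcases (show 0 ≤ V by positivity).eq_or_lt with hV | hV
  · have hε (i : ι) : ε i = 0 := by
      simpa using (Finset.sum_eq_zero_iff_of_nonneg fun i _ => sq_nonneg (ε i)).1 hV.symm i
        (Finset.mem_univ i)
    have hℓ (z : ∀ i, Ω i) : ∑ i, ℓ i (z i) = 0 :=
      Finset.sum_eq_zero fun i _ => by simpa [hε] using (h i).abs_le (z i)
    simp [hℓ, hε, ht, ← hV]
  have htail := HasSubgaussianMGF.measure_sum_ge_le_of_iIndepFun (s := Finset.univ)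
    (iIndepFun_pi fun i => ((h i).measurable.sub_const (∫ a, ℓ i a ∂(P i))).aemeasurable)
    (fun i _ => (h i).hasSubgaussianMGF_eval) (Real.sqrt_nonneg _ : 0 ≤ t)
  have hexp : Real.exp (-t ^ 2 / (2 * V)) = δ := by
    have hlog : 0 < Real.log (1 / δ) := Real.log_pos (one_lt_one_div hδ hδ1)
    rw [ht, Real.sq_sqrt (by positivity), mul_comm, neg_div,
      mul_div_cancel_right₀ _ (by positivity), one_div, Real.log_inv, neg_neg, Real.exp_log hδ]
  rw [← ofReal_measureReal]
  refine ENNReal.ofReal_le_ofReal ((measureReal_mono fun z hz => ?_).trans (htail.trans_eq ?_))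
  · simp only [Set.mem_ofPred_eq, Finset.sum_sub_distrib] at hz ⊢
    linarith
  · simpa only [NNReal.coe_sum, NNReal.coe_pow, coe_nnnorm, Real.norm_eq_abs, sq_abs] using hexp

lemma Indist.pi_pure [∀ i, IsProbabilityMeasure (P i)] [∀ i, IsProbabilityMeasure (Q i)]
    {ε : ι → ℝ} (hε : ∀ i, 0 ≤ ε i) (h : ∀ i, Indist (ε i) 0 (P i) (Q i)) {δ : ℝ} (hδ : 0 < δ) :
    Indist (√(2 * (∑ i, ε i ^ 2) * Real.log (1 / δ)) + ∑ i, ε i * (Real.exp (ε i) - 1)) δ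
      (Measure.pi P) (Measure.pi Q) := by
  choose ℓ hℓ using fun i => (h i).exists_isPrivacyLoss (hε i)
  choose ℓ' hℓ' using fun i => (h i).symm.exists_isPrivacyLoss (hε i)
  exact fun S hS => ⟨(IsPrivacyLoss.pi hℓ).measure_le_of_measure_lt_le
      (IsPrivacyLoss.measure_pi_lt_sum_le hℓ hδ) hS,
    (IsPrivacyLoss.pi hℓ').measure_le_of_measure_lt_le
      (IsPrivacyLoss.measure_pi_lt_sum_le hℓ' hδ) hS⟩

theorem Indist.pi [∀ i, IsProbabilityMeasure (P i)] [∀ i, IsProbabilityMeasure (Q i)]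
    {ε δ : ι → ℝ} (hε : ∀ i, 0 ≤ ε i) (hδ : ∀ i, 0 ≤ δ i)
    (h : ∀ i, Indist (ε i) (δ i) (P i) (Q i)) {δ' : ℝ} (hδ' : 0 < δ') :
    Indist (√(2 * (∑ i, ε i ^ 2) * Real.log (1 / δ')) + ∑ i, ε i * (Real.exp (ε i) - 1))
      (∑ i, δ i + δ') (Measure.pi P) (Measure.pi Q) := by
  have hsum : 0 ≤ ∑ i, δ i := Finset.sum_nonneg fun i _ => hδ i
  rcases le_or_gt 1 (∑ i, δ i) with hδ1 | hδ1
  · exact indist_of_one_le (by linarith)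
  have hlt (i : ι) : δ i < 1 :=
    (Finset.single_le_sum (fun i _ => hδ i) (Finset.mem_univ i)).trans_lt hδ1
  choose P' Q' _ _ hpure hP' hQ' using fun i => (h i).exists_pure_part (hε i) (hδ i) (hlt i)
  have hscale : ENNReal.ofReal (1 - ∑ i, δ i) ≤ ∏ i, ENNReal.ofReal (1 - δ i) := by
    rw [← ENNReal.ofReal_prod_of_nonneg fun i _ => sub_nonneg.2 (hlt i).le]
    exact ENNReal.ofReal_le_ofReal
      (one_sub_sum_le_prod_one_sub _ (fun i _ => hδ i) fun i _ => (hlt i).le)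
  have hle {μ ν : ∀ i, Measure (Ω i)} [∀ i, IsProbabilityMeasure (μ i)]
      [∀ i, IsProbabilityMeasure (ν i)] (hμν : ∀ i, ENNReal.ofReal (1 - δ i) • μ i ≤ ν i) :
      ENNReal.ofReal (1 - ∑ i, δ i) • Measure.pi μ ≤ Measure.pi ν :=
    le_trans (by gcongr) (prod_smul_pi_le hμν)
  exact (Indist.pi_pure hε hpure hδ').of_smul_le hδ'.le hsum (hle hP') (hle hQ')

theorem Indist.pi_of_card_le [∀ i, IsProbabilityMeasure (P i)] [∀ i, IsProbabilityMeasure (Q i)]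
    {ε δ δ' : ℝ} (hε : 0 ≤ ε) (hδ : 0 ≤ δ) (hδ' : 0 < δ') {J : Finset ι} {K : ℕ} (hJ : J.card ≤ K)
    (h : ∀ i ∈ J, Indist ε δ (P i) (Q i)) (heq : ∀ i ∉ J, P i = Q i) :
    Indist (√(2 * K * Real.log (1 / δ')) * ε + K * ε * (Real.exp ε - 1)) (K * δ + δ')
      (Measure.pi P) (Measure.pi Q) := by
  classical
  rcases le_or_gt 1 δ' with hδ1 | hδ1
  · exact indist_of_one_le (by nlinarith [mul_nonneg K.cast_nonneg hδ])
  set ε' : ι → ℝ := fun i => if i ∈ J then ε else 0 with hε'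
  set δ₀ : ι → ℝ := fun i => if i ∈ J then δ else 0 with hδ₀
  have hcoord (i : ι) : Indist (ε' i) (δ₀ i) (P i) (Q i) := by
    by_cases hi : i ∈ J
    · simpa [hε', hδ₀, hi] using h i hi
    · simpa [hε', hδ₀, hi, heq i hi] using Indist.refl _
  have hlog : 0 < Real.log (1 / δ') := Real.log_pos (one_lt_one_div hδ' hδ1)
  have hexp : 0 ≤ Real.exp ε - 1 := sub_nonneg.2 (Real.one_le_exp hε)
  have hsq : ∑ i, ε' i ^ 2 = J.card * ε ^ 2 := by simp [hε', ite_pow]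
  have hlin : ∑ i, ε' i * (Real.exp (ε' i) - 1) = J.card * (ε * (Real.exp ε - 1)) := by
    have hterm (i : ι) : ε' i * (Real.exp (ε' i) - 1) =
        if i ∈ J then ε * (Real.exp ε - 1) else 0 := by
      by_cases hi : i ∈ J <;> simp [hε', hi]
    simp [hterm]
  have hsum : ∑ i, δ₀ i = J.card * δ := by simp [hδ₀]
  refine (Indist.pi (fun i => ite_nonneg hε le_rfl) (fun i => ite_nonneg hδ le_rfl) hcoord
    hδ').mono ?_ ?_
  · rw [hsq, hlin]
    calc √(2 * (J.card * ε ^ 2) * Real.log (1 / δ')) + J.card * (ε * (Real.exp ε - 1))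
        ≤ √(2 * (K * ε ^ 2) * Real.log (1 / δ')) + K * (ε * (Real.exp ε - 1)) := by gcongr
      _ = √(2 * K * Real.log (1 / δ')) * ε + K * ε * (Real.exp ε - 1) := by
        rw [← mul_assoc, mul_right_comm, Real.sqrt_mul' _ (sq_nonneg ε), Real.sqrt_sq hε,
          mul_assoc (K : ℝ)]
  · rw [hsum]
    gcongr

end Pi

section Shift

variable {G : Type*} [Add G] [MeasurableSpace G] [MeasurableAdd G] {ι : Type*} [Fintype ι]

lemma indist_pi_map_add {ε δ δ' : ℝ} (hε : 0 ≤ ε) (hδ : 0 ≤ δ) (hδ' : 0 < δ') {D : Set G}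
    {ν : Measure G} [IsProbabilityMeasure ν]
    (hν : ∀ a ∈ D, ∀ b ∈ D, Indist ε δ (ν.map (· + a)) (ν.map (· + b))) {a b : ι → G}
    {J : Finset ι} (ha : ∀ j ∈ J, a j ∈ D) (hb : ∀ j ∈ J, b j ∈ D) (hab : ∀ j ∉ J, a j = b j)
    {K : ℕ} (hJ : J.card ≤ K) :
    Indist (√(2 * K * Real.log (1 / δ')) * ε + K * ε * (Real.exp ε - 1)) (K * δ + δ')
      ((Measure.pi fun _ : ι => ν).map fun z j => z j + a j)
      ((Measure.pi fun _ : ι => ν).map fun z j => z j + b j) := by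
  have hprob (c : G) : IsProbabilityMeasure (ν.map (· + c)) :=
    Measure.isProbabilityMeasure_map (measurable_add_const c).aemeasurable
  have hmap (c : ι → G) : (Measure.pi fun _ : ι => ν).map (fun z j => z j + c j) =
      Measure.pi fun j => ν.map (· + c j) :=
    Measure.pi_map_pi fun j => (measurable_add_const (c j)).aemeasurable
  rw [hmap, hmap]
  exact Indist.pi_of_card_le hε hδ hδ' hJ (fun j hj => hν _ (ha j hj) _ (hb j hj))
    fun j hj => by rw [hab j hj]

end Shift

section Ring

variable {n m K u v : ℕ}

/-- The first cycle in which user `v` receives a token holding the contribution that user `u` makes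
in cycle `c`. -/
def firstView (u v c : ℕ) : ℕ := if u < v then c else c + 1

lemma lt_iff_firstView_le (hu : u < n) (hv : v < n) (c k : ℕ) :
    c * n + u < k * n + v ↔ firstView u v c ≤ k := by
  rcases lt_trichotomy c k with h | rfl | h
  · have : (c + 1) * n ≤ k * n := Nat.mul_le_mul_right n h
    grind [firstView]
  · grind [firstView]
  · have : (k + 1) * n ≤ c * n := Nat.mul_le_mul_right n h
    grind [firstView]

lemma le_ceilDiv_mul {b : ℕ} (hb : 0 < b) (a : ℕ) : a ≤ a ⌈/⌉ b * b := by
  rw [mul_comm]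
  exact le_smul_ceilDiv hb

lemma ceilDiv_mul_lt {b : ℕ} (hb : 0 < b) (a : ℕ) : a ⌈/⌉ b * b < a + b := by
  have : a ⌈/⌉ b * b ≤ a + b - 1 := by
    rw [Nat.ceilDiv_eq_add_pred_div]
    exact Nat.div_mul_le_self _ _
  lia

/-- The noise sample masking the contribution that user `u` makes in cycle `c` from user `v`: the
first one added since the last view of `v` that does not contain this contribution. When there is no
such view, the subtraction truncates to zero and the sample is the initial one. -/
def maskIndex (n u v c : ℕ) : ℕ := (firstView u v c * n + v - n) ⌈/⌉ (n - 1)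

lemma maskIndex_mul_lt_iff_firstView_le (hn : 2 ≤ n) (c k : ℕ) :
    maskIndex n u v c * (n - 1) < k * n + v ↔ firstView u v c ≤ k := by
  have hlower : firstView u v c * n + v - n ≤ maskIndex n u v c * (n - 1) :=
    le_ceilDiv_mul (by lia) _
  have hupper : maskIndex n u v c * (n - 1) < firstView u v c * n + v := by
    rcases le_or_gt n (firstView u v c * n + v) with h | h
    · have := ceilDiv_mul_lt (b := n - 1) (by lia) (firstView u v c * n + v - n)
      rw [maskIndex]
      lia
    · have hpos : 0 < firstView u v c * n + v := by
        rcases lt_or_ge u v with huv | huv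
        · lia
        · have : 0 < firstView u v c := by grind [firstView]
          positivity
      simpa [maskIndex, Nat.sub_eq_zero_of_le h.le] using hpos
  refine ⟨fun h => not_lt.1 fun hk => ?_, fun h => hupper.trans_le (by gcongr)⟩
  have : (k + 1) * n ≤ firstView u v c * n := Nat.mul_le_mul_right n hk
  lia

lemma maskIndex_mul_lt_iff (hn : 2 ≤ n) (hu : u < n) (hv : v < n) (c k : ℕ) :
    maskIndex n u v c * (n - 1) < k * n + v ↔ c * n + u < k * n + v := by
  rw [maskIndex_mul_lt_iff_firstView_le hn, lt_iff_firstView_le hu hv]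

lemma maskIndex_injective (hn : 2 ≤ n) : Function.Injective (maskIndex n u v) := by
  intro c d h
  have : firstView u v c = firstView u v d := eq_of_forall_ge_iff fun k => by
    rw [← maskIndex_mul_lt_iff_firstView_le hn, ← maskIndex_mul_lt_iff_firstView_le hn, h]
  grind [firstView]

/-- The vector adding the contribution `y c` to the noise sample that masks it, for each `c < K`. -/
def maskedShift (n K u v : ℕ) (y : ℕ → ℝ) (j : ℕ) : ℝ :=
  ∑ c ∈ Finset.range K with maskIndex n u v c = j, y c

lemma maskedShift_maskIndex (hn : 2 ≤ n) (y : ℕ → ℝ) {c : ℕ} (hc : c < K) :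
    maskedShift n K u v y (maskIndex n u v c) = y c := by
  simp [maskedShift, (maskIndex_injective hn).eq_iff, Finset.filter_eq', hc]

lemma maskedShift_eq_zero (y : ℕ → ℝ) {j : ℕ} (hj : j ∉ (Finset.range K).image (maskIndex n u v)) :
    maskedShift n K u v y j = 0 := by
  refine Finset.sum_eq_zero fun c hc => ?_
  rw [Finset.mem_filter] at hc
  exact absurd (Finset.mem_image.2 ⟨c, hc⟩) hj

lemma sum_maskedShift (hn : 2 ≤ n) (hm : K * n ≤ m * (n - 1)) (hu : u < n) (hv : v < n)
    (y : ℕ → ℝ) {k : ℕ} (hk : k < K) :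
    ∑ j : Fin m, (if (j : ℕ) * (n - 1) < k * n + v then maskedShift n K u v y j else 0) =
      ∑ c ∈ Finset.range K with c * n + u < k * n + v, y c := by
  have hkK : k * n + v < K * n := by nlinarith
  have hlt {j : ℕ} (hj : j * (n - 1) < k * n + v) : j < m :=
    lt_of_mul_lt_mul_right (by lia : j * (n - 1) < m * (n - 1)) zero_le
  rw [Fin.sum_univ_eq_sum_range (fun j => if j * (n - 1) < k * n + v then
    maskedShift n K u v y j else 0) m, ← Finset.sum_filter]
  simp only [maskedShift]
  rw [Finset.sum_fiberwise_eq_sum_filter]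
  refine Finset.sum_congr (Finset.filter_congr fun c _ => ?_) fun _ _ => rfl
  simp only [Finset.mem_filter, Finset.mem_range, maskIndex_mul_lt_iff hn hu hv]
  exact and_iff_right_of_imp fun h => hlt ((maskIndex_mul_lt_iff hn hu hv c k).2 h)

lemma sum_range_eq_sum_update_add (hu : u < n) (x : ℕ → ℕ → ℝ) {s : ℕ} (hs : s ≤ K * n) :
    ∑ t ∈ Finset.range s, x (t % n) (t / n) =
      ∑ t ∈ Finset.range s, Function.update x u 0 (t % n) (t / n) +
        ∑ c ∈ Finset.range K with c * n + u < s, x u c := by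
  have hn : 0 < n := by lia
  have hterm (t : ℕ) : x (t % n) (t / n) = Function.update x u 0 (t % n) (t / n) +
      if t % n = u then x u (t / n) else 0 := by
    by_cases h : t % n = u <;> simp [h]
  simp only [hterm, Finset.sum_add_distrib, ← Finset.sum_filter]
  congr 1
  refine Finset.sum_nbij' (· / n) (· * n + u) ?_ ?_ ?_ ?_ fun _ _ => rfl
  · simp only [Finset.mem_filter, Finset.mem_range]
    rintro t ⟨ht, rfl⟩
    exact ⟨Nat.div_lt_of_lt_mul (by lia), by rwa [Nat.div_add_mod']⟩
  · simp +contextual [Nat.mod_eq_of_lt hu]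
  · simp only [Finset.mem_filter]
    rintro t ⟨-, rfl⟩
    exact Nat.div_add_mod' t n
  · simp [add_comm _ u, Nat.add_mul_div_right _ _ hn, Nat.div_eq_of_lt hu]

lemma ringToken_add (x : ℕ → ℕ → ℝ) (z w : Fin m → ℝ) (s : ℕ) :
    ringToken n m x (fun j => z j + w j) s =
      ringToken n m x z s + ∑ j : Fin m, if (j : ℕ) * (n - 1) < s then w j else 0 := by
  simp only [ringToken, ite_add_zero, Finset.sum_add_distrib, add_assoc]

lemma ringView_eq_ringView_update (hn : 2 ≤ n) (hm : K * n ≤ m * (n - 1)) (hu : u < n)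
    (hv : v < n) (x : ℕ → ℕ → ℝ) (z : Fin m → ℝ) :
    ringView n m K x v z =
      ringView n m K (Function.update x u 0) v fun j => z j + maskedShift n K u v (x u) j := by
  funext k
  have hs : k * n + v ≤ K * n := by nlinarith [k.isLt]
  rw [ringView, ringView, ringToken_add, sum_maskedShift hn hm hu hv _ k.isLt, ringToken,
    ringToken, sum_range_eq_sum_update_add hu x hs]
  ring

lemma measurable_ringView (x : ℕ → ℕ → ℝ) (v : ℕ) : Measurable (ringView n m K x v) := by
  refine measurable_pi_lambda _ fun k => Measurable.const_add ?_ _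
  exact Finset.measurable_sum _ fun j _ =>
    Measurable.ite (MeasurableSet.const _) (measurable_pi_apply j) measurable_const

lemma map_ringView_eq_map_map (hn : 2 ≤ n) (hm : K * n ≤ m * (n - 1)) (hu : u < n)
    (hv : v < n) (x : ℕ → ℕ → ℝ) (P : Measure (Fin m → ℝ)) :
    P.map (ringView n m K x v) =
      (P.map fun z (j : Fin m) => z j + maskedShift n K u v (x u) j).map
        (ringView n m K (Function.update x u 0) v) := by
  rw [Measure.map_map (measurable_ringView _ v) (by fun_prop)]
  congr 1
  exact funext fun z => ringView_eq_ringView_update hn hm hu hv x z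

end Ring

section Utility

open ProbabilityTheory

variable {ι : Type*} [Fintype ι] {ν : Measure ℝ} [IsProbabilityMeasure ν] {n m s : ℕ}

lemma integrable_sum_pi (hν : Integrable (fun a => a) ν) :
    Integrable (fun z : ι → ℝ => ∑ j, z j) (Measure.pi fun _ => ν) :=
  integrable_finsetSum _ fun _ _ => integrable_eval hν

lemma integral_sum_pi (hν : Integrable (fun a => a) ν) :
    ∫ z : ι → ℝ, ∑ j, z j ∂(Measure.pi fun _ => ν) = Fintype.card ι * ∫ a, a ∂ν := by
  rw [integral_finsetSum _ fun j _ => integrable_eval (i := j) hν]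
  simp [integral_eval (μ := fun _ : ι => ν)]

lemma integral_sum_pi_sq (hν : MemLp (fun a => a) 2 ν) (hmean : ∫ a, a ∂ν = 0) :
    ∫ z : ι → ℝ, (∑ j, z j) ^ 2 ∂(Measure.pi fun _ => ν) = Fintype.card ι * ∫ a, a ^ 2 ∂ν := by
  have hint : Integrable (fun a => a) ν := hν.integrable one_le_two
  have hvar := variance_sum_pi (μ := fun _ : ι => ν) (X := fun _ a => a) fun _ => hν
  have hsum : (∑ i, fun z : ι → ℝ => z i) = fun z => ∑ i, z i := by
    funext z
    simp
  rw [hsum, variance_of_integral_eq_zero (integrable_sum_pi hint).aemeasurable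
    (by rw [integral_sum_pi hint, hmean, mul_zero])] at hvar
  simpa [variance_of_integral_eq_zero hint.aemeasurable hmean] using hvar

lemma ringToken_eq_sum_add_sum (hs : ∀ j < m, j * (n - 1) < s) (x : ℕ → ℕ → ℝ) (z : Fin m → ℝ) :
    ringToken n m x z s = ∑ t ∈ Finset.range s, x (t % n) (t / n) + ∑ j, z j := by
  simp [ringToken, hs]

lemma integral_ringToken (hs : ∀ j < m, j * (n - 1) < s) (hν : Integrable (fun a => a) ν)
    (x : ℕ → ℕ → ℝ) :
    ∫ z, ringToken n m x z s ∂(Measure.pi fun _ => ν) =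
      ∑ t ∈ Finset.range s, x (t % n) (t / n) + m * ∫ a, a ∂ν := by
  simp only [ringToken_eq_sum_add_sum hs]
  rw [integral_add (integrable_const _) (integrable_sum_pi hν), integral_sum_pi hν]
  simp

lemma integral_ringToken_sub_sq (hs : ∀ j < m, j * (n - 1) < s) (hν : MemLp (fun a => a) 2 ν)
    (hmean : ∫ a, a ∂ν = 0) (x : ℕ → ℕ → ℝ) :
    ∫ z, (ringToken n m x z s - ∑ t ∈ Finset.range s, x (t % n) (t / n)) ^ 2
      ∂(Measure.pi fun _ => ν) = m * ∫ a, a ^ 2 ∂ν := by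
  simp only [ringToken_eq_sum_add_sum hs, add_sub_cancel_left]
  rw [integral_sum_pi_sq hν hmean, Fintype.card_fin]

end Utility

theorem indist_map_ringView {n m K u v : ℕ} (hn : 2 ≤ n) (hm : K * n ≤ m * (n - 1)) (hu : u < n)
    (hv : v < n) {ε δ δ' : ℝ} (hε : 0 ≤ ε) (hδ : 0 ≤ δ) (hδ' : 0 < δ') {D : Set ℝ} {ν : Measure ℝ}
    [IsProbabilityMeasure ν] (hν : ∀ a ∈ D, ∀ b ∈ D, Indist ε δ (ν.map (· + a)) (ν.map (· + b)))
    {x x' : ℕ → ℕ → ℝ} (hx : ∀ k, x u k ∈ D) (hx' : ∀ k, x' u k ∈ D)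
    (hxx' : ∀ w k, w ≠ u → x w k = x' w k) :
    Indist (√(2 * K * Real.log (1 / δ')) * ε + K * ε * (Real.exp ε - 1)) (K * δ + δ')
      ((Measure.pi fun _ => ν).map (ringView n m K x v))
      ((Measure.pi fun _ => ν).map (ringView n m K x' v)) := by
  classical
  have hupdate : Function.update x' u 0 = Function.update x u 0 := by
    funext w
    by_cases hw : w = u
    · simp [hw]
    · simp [hw, funext fun k => hxx' w k hw]
  let I : Finset ℕ := (Finset.range K).image (maskIndex n u v)
  let J : Finset (Fin m) := {j | (j : ℕ) ∈ I}
  have hJ : J.card ≤ K :=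
    calc J.card ≤ I.card :=
          Finset.card_le_card_of_injOn _ (by simp [J, Set.MapsTo]) Fin.val_injective.injOn
      _ ≤ K := Finset.card_image_le.trans_eq (Finset.card_range K)
  have hmem {y : ℕ → ℝ} (hy : ∀ k, y k ∈ D) (j : Fin m) (hj : j ∈ J) :
      maskedShift n K u v y j ∈ D := by
    obtain ⟨c, hc, hcj⟩ := Finset.mem_image.1 (Finset.mem_filter.1 hj).2
    rw [← hcj, maskedShift_maskIndex hn y (Finset.mem_range.1 hc)]
    exact hy c
  have hzero (y : ℕ → ℝ) (j : Fin m) (hj : j ∉ J) : maskedShift n K u v y j = 0 :=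
    maskedShift_eq_zero y fun hI => hj (Finset.mem_filter.2 ⟨Finset.mem_univ j, hI⟩)
  rw [map_ringView_eq_map_map hn hm hu hv x, map_ringView_eq_map_map hn hm hu hv x', hupdate]
  refine Indist.map ?_ (measurable_ringView _ v)
  exact indist_pi_map_add hε hδ hδ' hν (hmem hx) (hmem hx')
    (fun j hj => by rw [hzero _ j hj, hzero _ j hj]) hJ

theorem ring_real_summation_general {n K : ℕ} (hn : 2 ≤ n) {ε δ σloc : ℝ} (hε : 0 ≤ ε) (hδ : 0 ≤ δ)
    {D : Set ℝ} {ν : Measure ℝ} [IsProbabilityMeasure ν] (hint2 : Integrable (fun a => a ^ 2) ν)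
    (hmean : ∫ a, a ∂ν = 0) (hvar : ∫ a, a ^ 2 ∂ν = σloc ^ 2)
    (hLDP : ∀ a ∈ D, ∀ b ∈ D, Indist ε δ (ν.map (· + a)) (ν.map (· + b)))
    {m : ℕ} (hm : m = (K * n + n - 2) / (n - 1)) :
    (∀ x : ℕ → ℕ → ℝ,
      ∫ z, ringToken n m x z (K * n) ∂(Measure.pi fun _ => ν) =
        ∑ t ∈ Finset.range (K * n), x (t % n) (t / n) ∧
      ∫ z, (ringToken n m x z (K * n) - ∑ t ∈ Finset.range (K * n), x (t % n) (t / n)) ^ 2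
        ∂(Measure.pi fun _ => ν) = m * σloc ^ 2) ∧
    ∀ δ' : ℝ, 0 < δ' → ∀ u v : ℕ, u < n → v < n → ∀ x x' : ℕ → ℕ → ℝ,
      (∀ k, x u k ∈ D) → (∀ k, x' u k ∈ D) → (∀ w k, w ≠ u → x w k = x' w k) →
      Indist (√(2 * K * Real.log (1 / δ')) * ε + K * ε * (Real.exp ε - 1)) (K * δ + δ')
        ((Measure.pi fun _ => ν).map (ringView n m K x v))
        ((Measure.pi fun _ => ν).map (ringView n m K x' v)) := by
  have hm' : m = (K * n) ⌈/⌉ (n - 1) := by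
    rw [hm, Nat.ceilDiv_eq_add_pred_div]
    congr 1
    lia
  have hadded (j : ℕ) (hj : j < m) : j * (n - 1) < K * n := by
    have hlt : m * (n - 1) < K * n + (n - 1) := hm' ▸ ceilDiv_mul_lt (by lia) (K * n)
    have : (j + 1) * (n - 1) ≤ m * (n - 1) := Nat.mul_le_mul_right _ hj
    lia
  have hL2 : MemLp (fun a => a) 2 ν := (memLp_two_iff_integrable_sq (by fun_prop)).2 hint2
  refine ⟨fun x => ⟨?_, ?_⟩, fun δ' hδ' u v hu hv x x' hx hx' hxx' => ?_⟩
  · rw [integral_ringToken hadded (hL2.integrable one_le_two), hmean, mul_zero, add_zero]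
  · rw [integral_ringToken_sub_sq hadded hL2 hmean, hvar]
  · exact indist_map_ringView hn (hm' ▸ le_ceilDiv_mul (by lia) _) hu hv hε hδ hδ' hLDP hx hx' hxx'

/-- Theorem 1: private real summation on the ring.
`ν` is a centered noise distribution with variance `σloc²` making the additive
mechanism `(ε,δ)`-LDP on `[0,1]`, and `m = ⌈Kn/(n-1)⌉` is the number of noise
additions. Then (i) the final token is an unbiased estimator of
`x̄ = ∑_{u,k} x_u^k` with variance `m·σloc²` (standard deviation `√m·σloc`), and
(ii) for any `δ' > 0` and distinct users `u ≠ v`, the views of `v` under two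
contribution families in `[0,1]` differing only at user `u` are
`(√(2K·ln(1/δ'))·ε + K·ε·(e^ε − 1), K·δ + δ')`-indistinguishable. -/
theorem ring_real_summation
    (n K : ℕ) (hn : 2 ≤ n) (hK : 1 ≤ K)
    (ε δ σloc : ℝ) (hε : 0 < ε) (hδ : 0 < δ)
    (ν : Measure ℝ) (hprob : IsProbabilityMeasure ν)
    (hint : Integrable (fun a => a) ν) (hint2 : Integrable (fun a => a ^ 2) ν)
    (hmean : (∫ a, a ∂ν) = 0) (hvar : (∫ a, a ^ 2 ∂ν) = σloc ^ 2)
    (hLDP : ∀ a ∈ Set.Icc (0 : ℝ) 1, ∀ b ∈ Set.Icc (0 : ℝ) 1,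
      Indist ε δ (ν.map (· + a)) (ν.map (· + b)))
    (m : ℕ) (hm : m = (K * n + n - 2) / (n - 1)) :
    -- (i) utility: unbiasedness and variance of the final token
    (∀ x : ℕ → ℕ → ℝ, (∀ w k, x w k ∈ Set.Icc (0 : ℝ) 1) →
      (∫ z, ringToken n m x z (K * n) ∂(Measure.pi fun _ : Fin m => ν))
          = (∑ t ∈ Finset.range (K * n), x (t % n) (t / n)) ∧
      (∫ z, (ringToken n m x z (K * n)
              - ∑ t ∈ Finset.range (K * n), x (t % n) (t / n)) ^ 2
          ∂(Measure.pi fun _ : Fin m => ν)) = m * σloc ^ 2)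
    ∧
    -- (ii) network differential privacy of the view of any user v w.r.t. any user u
    (∀ δ' : ℝ, 0 < δ' → ∀ u v : ℕ, u < n → v < n → u ≠ v →
      ∀ x x' : ℕ → ℕ → ℝ,
        (∀ w k, x w k ∈ Set.Icc (0 : ℝ) 1) → (∀ w k, x' w k ∈ Set.Icc (0 : ℝ) 1) →
        (∀ w k, w ≠ u → x w k = x' w k) →
        Indist (Real.sqrt (2 * K * Real.log (1 / δ')) * ε + K * ε * (Real.exp ε - 1))
          (K * δ + δ')
          (Measure.map (ringView n m K x v) (Measure.pi fun _ : Fin m => ν))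
          (Measure.map (ringView n m K x' v) (Measure.pi fun _ : Fin m => ν))) :=
  have h := ring_real_summation_general (K := K) hn hε.le hδ.le hint2 hmean hvar hLDP hm
  ⟨fun x _ => h.1 x, fun δ' hδ' u v hu hv _ x x' hx hx' =>
    h.2 δ' hδ' u v hu hv x x' (hx u) (hx' u)⟩
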